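/- Suppose P{A∈(0,1]}=1; P{B>x} ~ a·x^c·e^{−bx} as x→∞ for some a,b>0 and c<−1; E[e^{bB}·1_{{A=1}}]<1; and for each y∈ℝ, P{Ay+B>x} ~ f(y)·P{B>x} as x→∞, where f is a nonnegative measurable function. Then there exist a constant c_Z>0 and a probability measure μ on ℝ concentrated on [0,∞) such that μ((x,∞)) ~ c_Z·P{B>x} as x→∞ and, for any random variable Z with distribution μ independent of (A,B), P{AZ+B>x} ≤ P{Z>x} for all x∈ℝ (i.e., AZ+B is stochastically dominated by Z). -/

import Mathlib

open MeasureTheory ProbabilityTheory Filter Finset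

noncomputable def GG (b c x : ℝ) : ℝ := x ^ c * Real.exp (-b * x)

lemma GG_pos {b c x : ℝ} (hx : 0 < x) : 0 < GG b c x :=
  mul_pos (Real.rpow_pos_of_pos hx c) (Real.exp_pos _)

lemma GG_meas (b c : ℝ) : Measurable (GG b c) := by
  unfold GG; fun_prop

lemma GG_anti {b c x y : ℝ} (hb : 0 < b) (hc : c < -1) (hx : 0 < x) (hxy : x ≤ y) :
    GG b c y ≤ GG b c x := by
  unfold GG
  have h1 : y ^ c ≤ x ^ c := Real.rpow_le_rpow_of_nonpos hx hxy (by linarith)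
  have h2 : Real.exp (-b * y) ≤ Real.exp (-b * x) := by
    apply Real.exp_le_exp.2; nlinarith
  have := Real.rpow_pos_of_pos hx c
  gcongr

lemma GG_unit {b c v : ℝ} (hb : 0 < b) (hc : c < -1) (hv : 1 ≤ v) :
    ENNReal.ofReal (GG b c v) ≤
      ∫⁻ u in Set.Ioc v (v + 1), ENNReal.ofReal ((2 ^ (-c) * Real.exp b) * GG b c u) := by
  have e : ENNReal.ofReal (GG b c v) =
      ∫⁻ u in Set.Ioc v (v + 1), ENNReal.ofReal (GG b c v) := by
    simp [lintegral_const]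
  rw [e]
  apply setLIntegral_mono' measurableSet_Ioc
  intro u hu
  apply ENNReal.ofReal_le_ofReal
  have hu0 : 0 < u := by linarith [hu.1]
  have h1 : (2 * v) ^ c ≤ u ^ c :=
    Real.rpow_le_rpow_of_nonpos hu0 (by linarith [hu.2]) (by linarith)
  rw [Real.mul_rpow (by norm_num) (by linarith)] at h1
  have h2 : Real.exp (-b * v) ≤ Real.exp b * Real.exp (-b * u) := by
    rw [← Real.exp_add]; apply Real.exp_le_exp.2; nlinarith [hu.2]
  have h3 : (v:ℝ) ^ c ≤ 2 ^ (-c) * u ^ c := by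
    rw [Real.rpow_neg (by norm_num)]
    have : (0:ℝ) < 2 ^ c := Real.rpow_pos_of_pos (by norm_num) c
    rw [inv_mul_eq_div, le_div_iff₀ this]; linarith
  unfold GG
  calc v ^ c * Real.exp (-b * v) ≤ (2 ^ (-c) * u ^ c) * (Real.exp b * Real.exp (-b * u)) := by
        gcongr
    _ = _ := by ring

lemma rpow_tail {c t : ℝ} (hc : c < -1) (ht : 0 < t) :
    ∫⁻ u in Set.Ioi t, ENNReal.ofReal (u ^ c) = ENNReal.ofReal (-t ^ (c + 1) / (c + 1)) := by
  rw [← integral_Ioi_rpow_of_lt hc ht]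
  rw [ofReal_integral_eq_lintegral_ofReal (integrableOn_Ioi_rpow_of_lt hc ht)]
  filter_upwards [ae_restrict_mem measurableSet_Ioi] with u hu
  exact Real.rpow_nonneg (ht.le.trans (le_of_lt hu)) _

lemma swapB {Ω : Type*} [MeasurableSpace Ω] (P : Measure Ω) [IsProbabilityMeasure P]
    (B : Ω → ℝ) (hB : Measurable B) (h g : ℝ → ℝ) (hh : Measurable h) (hg : Measurable g)
    (S : Set ℝ) :
    ∫⁻ ω, (∫⁻ u in S, Set.indicator {p : Ω × ℝ | B p.1 > h p.2}
        (fun p => ENNReal.ofReal (g p.2)) (ω, u)) ∂P =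
      ∫⁻ u in S, ENNReal.ofReal (g u) * P {ω | B ω > h u} := by
  have hm : MeasurableSet {p : Ω × ℝ | B p.1 > h p.2} :=
    measurableSet_lt (hh.comp measurable_snd) (hB.comp measurable_fst)
  rw [lintegral_lintegral_swap]
  · refine lintegral_congr fun u => ?_
    have : (fun ω => Set.indicator {p : Ω × ℝ | B p.1 > h p.2}
        (fun p => ENNReal.ofReal (g p.2)) (ω, u)) =
        Set.indicator {ω | B ω > h u} (fun _ => ENNReal.ofReal (g u)) := by
      ext ω; simp [Set.indicator]
    rw [this, lintegral_indicator_const (measurableSet_lt measurable_const hB)]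
  · apply Measurable.aemeasurable
    exact (Measurable.indicator (by fun_prop) hm)

lemma bigB {Ω : Type*} [MeasurableSpace Ω] (P : Measure Ω) [IsProbabilityMeasure P]
    (B : Ω → ℝ) (hB : Measurable B) {b c C y0 t x : ℝ} (hb : 0 < b) (hc : c < -1)
    (hC : 0 < C)
    (htail : ∀ y, y0 ≤ y → P {ω | B ω > y} ≤ ENNReal.ofReal (C * GG b c y))
    (ht : 1 ≤ t) (hx : 0 < x) (hx' : 2 * y0 ≤ x) :
    ∫⁻ ω, Set.indicator {ω | B ω > x / 2}
      (fun ω => ENNReal.ofReal (GG b c (max t (x - B ω)))) ω ∂P ≤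
      ENNReal.ofReal (((2 ^ (-c) * Real.exp b) * C * 2 ^ (-c) * (-t ^ (c + 1) / (c + 1)))
        * GG b c x) := by
  set K : ℝ := 2 ^ (-c) * Real.exp b with hK
  have hK0 : 0 < K := by positivity
  have hG := GG_pos (b := b) (c := c) hx
  calc _ ≤ ∫⁻ ω, (∫⁻ u in Set.Ioi t, Set.indicator {p : Ω × ℝ | B p.1 > max (x - p.2) (x / 2)}
        (fun p => ENNReal.ofReal (K * GG b c p.2)) (ω, u)) ∂P := by
        apply lintegral_mono
        intro ω
        by_cases hω : B ω > x / 2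
        · simp only [Set.indicator, Set.mem_ofPred_eq, hω, if_true]
          refine (GG_unit hb hc (le_max_of_le_left ht)).trans ?_
          refine le_trans ?_ (lintegral_mono_set (s := Set.Ioc (max t (x - B ω)) (max t (x - B ω) + 1)) ?_)
          · apply setLIntegral_mono' measurableSet_Ioc
            intro u hu
            have h1 : max (x - u) (x / 2) < B ω := by
              have := (le_max_right t (x - B ω)).trans_lt hu.1
              apply max_lt _ hω; linarith
            simp [h1, hK]
          · intro u hu
            exact (le_max_left _ _).trans_lt hu.1
        · simp [Set.indicator, hω]
    _ = ∫⁻ u in Set.Ioi t, ENNReal.ofReal (K * GG b c u) * P {ω | B ω > max (x - u) (x / 2)} :=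
        swapB P B hB (fun u => max (x - u) (x / 2)) (fun u => K * GG b c u) (by fun_prop)
          ((GG_meas b c).const_mul K) _
    _ ≤ ∫⁻ u in Set.Ioi t, ENNReal.ofReal (K * C * 2 ^ (-c) * GG b c x) * ENNReal.ofReal (u ^ c) := by
        apply setLIntegral_mono' measurableSet_Ioi
        intro u hu
        have hu0 : 0 < u := by have : t < u := hu; linarith
        have h1 := htail (max (x - u) (x / 2)) (le_max_of_le_right (by linarith))
        refine (mul_le_mul_right h1 _).trans ?_
        rw [← ENNReal.ofReal_mul (mul_nonneg hK0.le (GG_pos hu0).le),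
          ← ENNReal.ofReal_mul (by positivity)]
        apply ENNReal.ofReal_le_ofReal
        set y := max (x - u) (x / 2)
        have hy1 : x - u ≤ y := le_max_left _ _
        have hy2 : x / 2 ≤ y := le_max_right _ _
        have h2 : y ^ c ≤ 2 ^ (-c) * x ^ c := by
          refine (Real.rpow_le_rpow_of_nonpos (by positivity) hy2 (by linarith)).trans ?_
          rw [Real.div_rpow hx.le (by norm_num), Real.rpow_neg (by norm_num), div_eq_inv_mul]
        have h3 : Real.exp (-b * u) * Real.exp (-b * y) ≤ Real.exp (-b * x) := by
          rw [← Real.exp_add]; apply Real.exp_le_exp.2; nlinarith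
        have hu1 := Real.rpow_pos_of_pos hu0 c
        have hx1 := Real.rpow_pos_of_pos hx c
        unfold GG
        calc _ = K * C * u ^ c * (y ^ c * (Real.exp (-b * u) * Real.exp (-b * y))) := by ring
          _ ≤ K * C * u ^ c * ((2 ^ (-c) * x ^ c) * Real.exp (-b * x)) := by gcongr
          _ = _ := by ring
    _ = _ := by
        rw [lintegral_const_mul _ (by fun_prop), rpow_tail hc (by linarith),
          ← ENNReal.ofReal_mul (by positivity)]
        congr 1; ring

lemma expB {Ω : Type*} [MeasurableSpace Ω] (P : Measure Ω) [IsProbabilityMeasure P]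
    (B : Ω → ℝ) (hB : Measurable B) {b c C y0 : ℝ} (hb : 0 < b) (hc : c < -1)
    (hC : 0 < C) (hy0 : 0 < y0)
    (htail : ∀ y, y0 ≤ y → P {ω | B ω > y} ≤ ENNReal.ofReal (C * GG b c y)) :
    ∫⁻ ω, ENNReal.ofReal (Real.exp (b * B ω)) ∂P ≠ ⊤ := by
  have key : ∫⁻ ω, ENNReal.ofReal (Real.exp (b * B ω)) ∂P ≤
      ∫⁻ ω, (ENNReal.ofReal (Real.exp (b * (y0 + 1))) +
       ∫⁻ u in Set.Ioi y0, Set.indicator {p : Ω × ℝ | B p.1 > p.2}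
        (fun p => ENNReal.ofReal (Real.exp b * Real.exp (b * p.2))) (ω, u)) ∂P := by
    apply lintegral_mono
    intro ω
    by_cases hω : B ω ≤ y0 + 1
    · refine le_add_right (ENNReal.ofReal_le_ofReal (Real.exp_le_exp.2 ?_))
      gcongr
    · push Not at hω
      refine le_add_left ?_
      have e : ENNReal.ofReal (Real.exp (b * B ω)) =
          ∫⁻ u in Set.Ioo (B ω - 1) (B ω), ENNReal.ofReal (Real.exp (b * B ω)) := by
        simp [lintegral_const]
      refine e.le.trans ?_
      refine le_trans ?_ (lintegral_mono_set (s := Set.Ioo (B ω - 1) (B ω)) ?_)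
      · apply setLIntegral_mono' measurableSet_Ioo
        intro u hu
        have : u < B ω := hu.2
        simp only [Set.indicator, Set.mem_ofPred_eq, gt_iff_lt, this, if_true]
        rw [← Real.exp_add]
        apply ENNReal.ofReal_le_ofReal; apply Real.exp_le_exp.2
        nlinarith [hu.1]
      · intro u hu
        have := hu.1
        show y0 < u
        linarith
  refine ne_top_of_le_ne_top ?_ key
  rw [lintegral_add_left measurable_const, swapB P B hB (fun u => u)
    (fun u => Real.exp b * Real.exp (b * u)) measurable_id (by fun_prop)]
  refine ENNReal.add_ne_top.2 ⟨by simp, ?_⟩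
  have : ∫⁻ u in Set.Ioi y0, ENNReal.ofReal (Real.exp b * Real.exp (b * u)) * P {ω | B ω > u} ≤
      ∫⁻ u in Set.Ioi y0, ENNReal.ofReal (Real.exp b * C) * ENNReal.ofReal (u ^ c) := by
    apply setLIntegral_mono' measurableSet_Ioi
    intro u hu
    have h1 := htail u (le_of_lt hu)
    refine (mul_le_mul_right h1 _).trans ?_
    rw [← ENNReal.ofReal_mul (by positivity), ← ENNReal.ofReal_mul (by positivity)]
    apply ENNReal.ofReal_le_ofReal
    apply le_of_eq
    unfold GG
    have : Real.exp (b * u) * Real.exp (-b * u) = 1 := by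
      rw [← Real.exp_add]; simp
    linear_combination (Real.exp b * C * u ^ c) * this
  refine ne_top_of_le_ne_top ?_ this
  rw [lintegral_const_mul _ (by fun_prop), rpow_tail hc hy0]
  exact ENNReal.mul_ne_top (by simp) (by simp)

lemma GG_ratio {b c y x : ℝ} (hb : 0 < b) (hx : 0 < x) (hy : 0 < y) :
    GG b c y / GG b c x = (y / x) ^ c * Real.exp (b * (x - y)) := by
  unfold GG
  rw [Real.div_rpow hy.le hx.le, mul_div_mul_comm, ← Real.exp_sub]
  congr 2; ring

lemma smallB {Ω : Type*} [MeasurableSpace Ω] (P : Measure Ω) [IsProbabilityMeasure P]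
    (A B : Ω → ℝ) (hA : Measurable A) (hB : Measurable B)
    (hA01 : ∀ᵐ ω ∂P, 0 < A ω ∧ A ω ≤ 1) {b c : ℝ} (hb : 0 < b) (hc : c < -1)
    (hexp : ∫⁻ ω, ENNReal.ofReal (Real.exp (b * B ω)) ∂P ≠ ⊤) :
    Tendsto (fun x : ℝ => ∫⁻ ω, Set.indicator {ω | B ω ≤ x / 2}
      (fun ω => ENNReal.ofReal (GG b c ((x - B ω) / A ω) / GG b c x)) ω ∂P) atTop
      (nhds (∫⁻ ω in {ω | A ω = 1}, ENNReal.ofReal (Real.exp (b * B ω)) ∂P)) := by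
  have hs : {ω | A ω = 1} = A ⁻¹' {1} := by ext; simp
  rw [hs, ← lintegral_indicator (hA (measurableSet_singleton 1))]
  apply tendsto_lintegral_filter_of_dominated_convergence
    (fun ω => ENNReal.ofReal (2 ^ (-c)) * ENNReal.ofReal (Real.exp (b * B ω)))
  · refine Eventually.of_forall fun x => ?_
    apply Measurable.indicator _ (measurableSet_le hB measurable_const)
    exact (((GG_meas b c).comp ((measurable_const.sub hB).div hA)).div_const _).ennreal_ofReal
  · filter_upwards [eventually_gt_atTop 0] with x hx
    filter_upwards [hA01] with ω ⟨h0, h1⟩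
    by_cases hω : B ω ≤ x / 2
    · simp only [Set.indicator, Set.mem_ofPred_eq, hω, if_true]
      rw [← ENNReal.ofReal_mul (by positivity)]
      apply ENNReal.ofReal_le_ofReal
      have hxB : 0 < x - B ω := by linarith
      have h2 : x - B ω ≤ (x - B ω) / A ω := by
        rw [le_div_iff₀ h0]; nlinarith
      have h3 := GG_anti hb hc hxB h2
      calc _ ≤ GG b c (x - B ω) / GG b c x := by
            have := GG_pos (b := b) (c := c) hx
            gcongr
        _ = ((x - B ω) / x) ^ c * Real.exp (b * B ω) := by
            rw [GG_ratio hb hx hxB]; congr 3; ring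
        _ ≤ _ := by
            gcongr
            have : (1/2 : ℝ) ≤ (x - B ω) / x := by
              rw [le_div_iff₀ hx]; linarith
            refine (Real.rpow_le_rpow_of_nonpos (by norm_num) this (by linarith)).trans ?_
            rw [one_div, Real.inv_rpow (by norm_num), Real.rpow_neg (by norm_num)]
    · simp [Set.indicator, hω]
  · rw [lintegral_const_mul _ (by fun_prop)]
    exact ENNReal.mul_ne_top (by simp) hexp
  · filter_upwards [hA01] with ω ⟨h0, h1⟩
    have hev : ∀ᶠ x : ℝ in atTop, B ω ≤ x / 2 ∧ 0 < x := by
      filter_upwards [eventually_ge_atTop (2 * B ω), eventually_gt_atTop 0] with x h h'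
      exact ⟨by linarith, h'⟩
    have heq : (fun x : ℝ => ENNReal.ofReal (((x - B ω) / A ω / x) ^ c *
        Real.exp (b * (x - (x - B ω) / A ω)))) =ᶠ[atTop]
        (fun x : ℝ => Set.indicator {ω | B ω ≤ x / 2}
      (fun ω => ENNReal.ofReal (GG b c ((x - B ω) / A ω) / GG b c x)) ω) := by
      filter_upwards [hev] with x ⟨h, h'⟩
      simp only [Set.indicator, Set.mem_ofPred_eq, h, if_true]
      rw [GG_ratio hb h' (div_pos (by linarith) h0)]
    refine Tendsto.congr' heq ?_
    have hlim : Tendsto (fun x : ℝ => ((x - B ω) / A ω / x) ^ c) atTop (nhds ((A ω)⁻¹ ^ c)) := by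
      apply Tendsto.rpow_const _ (Or.inl (by positivity))
      have t1 : Tendsto (fun x : ℝ => (A ω)⁻¹ * (1 - B ω * x⁻¹)) atTop
          (nhds ((A ω)⁻¹ * (1 - B ω * 0))) :=
        (tendsto_const_nhds.sub (tendsto_inv_atTop_zero.const_mul _)).const_mul _
      simp only [mul_zero, sub_zero, mul_one] at t1
      refine t1.congr' ?_
      filter_upwards [eventually_gt_atTop 0] with x hx
      field_simp
    by_cases hA1 : A ω = 1
    · have : Set.indicator (A ⁻¹' {1}) (fun ω => ENNReal.ofReal (Real.exp (b * B ω))) ω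
          = ENNReal.ofReal (Real.exp (b * B ω)) := by simp [Set.indicator, hA1]
      rw [this]
      have t5 := ENNReal.tendsto_ofReal (hlim.mul_const (Real.exp (b * B ω)))
      rw [hA1, inv_one, Real.one_rpow, one_mul] at t5
      refine t5.congr fun x => ?_
      rw [hA1]
      have : x - (x - B ω) / 1 = B ω := by ring
      rw [this]
    · have hlt : A ω < 1 := lt_of_le_of_ne h1 hA1
      have hr : 0 < (A ω)⁻¹ - 1 := sub_pos.2 ((one_lt_inv₀ h0).2 hlt)
      have t2 : Tendsto (fun x : ℝ => Real.exp (b * (x - (x - B ω) / A ω))) atTop (nhds 0) := by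
        apply Real.tendsto_exp_atBot.comp
        have t3 : Tendsto (fun x : ℝ => -(b * ((A ω)⁻¹ - 1)) * x + b * (B ω / A ω)) atTop atBot := by
          apply tendsto_atBot_add_const_right
          exact tendsto_id.const_mul_atTop_of_neg (by nlinarith [mul_pos hb hr])
        refine t3.congr fun x => ?_
        field_simp; ring
      have t4 := ENNReal.tendsto_ofReal (hlim.mul t2)
      have : Set.indicator (A ⁻¹' {1}) (fun ω => ENNReal.ofReal (Real.exp (b * B ω))) ω
          = 0 := by simp [Set.indicator, hA1]
      rw [this]
      rw [mul_zero, ENNReal.ofReal_zero] at t4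
      exact t4

lemma GG_zero {b c : ℝ} (hb : 0 < b) (hc : c < -1) : Tendsto (GG b c) atTop (nhds 0) := by
  have h1 : Tendsto (fun x : ℝ => x ^ c) atTop (nhds 0) := by
    have := tendsto_rpow_neg_atTop (y := -c) (by linarith)
    simpa using this
  have h2 : Tendsto (fun x : ℝ => Real.exp (-b * x)) atTop (nhds 0) :=
    Real.tendsto_exp_atBot.comp (tendsto_id.const_mul_atTop_of_neg (by linarith))
  have h3 := h1.mul h2
  rw [mul_zero] at h3
  exact h3

lemma exists_mu {b c t : ℝ} (hb : 0 < b) (hc : c < -1) (ht : 1 ≤ t) :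
    ∃ μ : Measure ℝ, IsProbabilityMeasure μ ∧
      ∀ x, μ (Set.Ioi x) = ENNReal.ofReal (GG b c (max t x) / GG b c t) := by
  have hG := GG_pos (b := b) (c := c) (by linarith : 0 < t)
  have hcont : Continuous (fun x => 1 - GG b c (max t x) / GG b c t) := by
    unfold GG
    have : Continuous (fun x : ℝ => (max t x) ^ c) := by
      apply Continuous.rpow_const (by fun_prop)
      intro x; left
      have := le_max_left t x; linarith
    fun_prop
  let F : StieltjesFunction ℝ :=
    { toFun := fun x => 1 - GG b c (max t x) / GG b c t
      mono' := by
        intro x y hxy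
        have := GG_anti (b := b) (c := c) hb hc (x := max t x) (y := max t y)
          (by have := le_max_left t x; linarith) (max_le_max le_rfl hxy)
        simp only
        gcongr
      right_continuous' := fun x => hcont.continuousWithinAt }
  have hF : ∀ x, F x = 1 - GG b c (max t x) / GG b c t := fun x => rfl
  have htop : Tendsto F atTop (nhds 1) := by
    have h1 : Tendsto (fun x => 1 - GG b c (max t x) / GG b c t) atTop
        (nhds (1 - 0 / GG b c t)) := by
      apply tendsto_const_nhds.sub
      apply Tendsto.div_const
      exact (GG_zero hb hc).comp (tendsto_atTop_mono (fun x => le_max_right t x) tendsto_id)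
    simpa using h1
  have hbot : Tendsto F atBot (nhds 0) := by
    apply tendsto_const_nhds.congr'
    filter_upwards [eventually_le_atBot t] with x hx
    rw [hF, max_eq_left hx, div_self hG.ne', sub_self]
  refine ⟨F.measure, F.isProbabilityMeasure hbot htop, fun x => ?_⟩
  rw [F.measure_Ioi htop, hF]
  congr 1; ring

theorem stmt_15
    {Ω : Type*} [MeasureSpace Ω] [IsProbabilityMeasure (ℙ : Measure Ω)]
    (A B : Ω → ℝ)
    (hA : Measurable A) (hB : Measurable B)
    (hA01 : ℙ {ω | A ω ∈ Set.Ioc (0 : ℝ) 1} = 1)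
    (a b c : ℝ) (ha : 0 < a) (hb : 0 < b) (hc : c < -1)
    (hBtail : Tendsto (fun x : ℝ =>
      (ℙ {ω | B ω > x}).toReal / (a * x ^ c * Real.exp (-b * x))) atTop (nhds 1))
    (f : ℝ → ℝ) (hf : Measurable f) (hf0 : ∀ y, 0 ≤ f y)
    (htailAB : ∀ y : ℝ, Tendsto (fun x : ℝ =>
      (ℙ {ω | A ω * y + B ω > x}).toReal / (ℙ {ω | B ω > x}).toReal)
      atTop (nhds (f y)))
    (hmomB : ∫⁻ ω in {ω | A ω = 1}, ENNReal.ofReal (Real.exp (b * B ω)) ∂ℙ < 1) :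
    ∃ (cZ : ℝ) (μ : Measure ℝ), 0 < cZ ∧ IsProbabilityMeasure μ ∧
      μ (Set.Iio 0) = 0 ∧
      Tendsto (fun x : ℝ =>
        (μ (Set.Ioi x)).toReal / (cZ * (ℙ {ω | B ω > x}).toReal)) atTop (nhds 1) ∧
      ∀ x : ℝ, (Measure.prod ℙ μ) {p : Ω × ℝ | A p.1 * p.2 + B p.1 > x} ≤
        μ (Set.Ioi x) := by
  classical
  have hA01' : ∀ᵐ ω ∂(ℙ : Measure Ω), 0 < A ω ∧ A ω ≤ 1 := by
    have : ∀ᵐ ω ∂(ℙ : Measure Ω), ω ∈ {ω | A ω ∈ Set.Ioc (0 : ℝ) 1} :=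
      (prob_compl_eq_zero_iff (hA measurableSet_Ioc)).2 hA01
    exact this
  have hden : ∀ x : ℝ, a * x ^ c * Real.exp (-b * x) = a * GG b c x := fun x => by
    unfold GG; ring
  simp only [hden] at hBtail
  -- tail bound
  obtain ⟨y0, hy0, htail⟩ : ∃ y0 : ℝ, 0 < y0 ∧ ∀ y, y0 ≤ y →
      ℙ {ω | B ω > y} ≤ ENNReal.ofReal ((2 * a) * GG b c y) := by
    have h1 := hBtail.eventually (gt_mem_nhds (by norm_num : (1:ℝ) < 2))
    obtain ⟨N, hN⟩ := eventually_atTop.1 h1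
    refine ⟨max N 1, by positivity, fun y hy => ?_⟩
    have hy1 : 0 < y := by have := le_max_right N 1; linarith
    have h2 := hN y ((le_max_left _ _).trans hy)
    have hG := GG_pos (b := b) (c := c) hy1
    rw [div_lt_iff₀ (by positivity)] at h2
    rw [← ENNReal.ofReal_toReal (measure_ne_top ℙ {ω | B ω > y})]
    apply ENNReal.ofReal_le_ofReal
    linarith
  have hexp := expB ℙ B hB hb hc (by positivity) hy0 htail
  have hsmall := smallB ℙ A B hA hB hA01' hb hc hexp
  obtain ⟨q, hq1, hq2⟩ := ENNReal.lt_iff_exists_nnreal_btwn.1 hmomB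
  have hq2' : (q : ℝ) < 1 := by exact_mod_cast hq2
  obtain ⟨X, hX⟩ := eventually_atTop.1 (hsmall.eventually (gt_mem_nhds hq1))
  have hbig : Tendsto (fun t : ℝ => (2 ^ (-c) * Real.exp b) * (2 * a) * 2 ^ (-c) *
      (-t ^ (c + 1) / (c + 1))) atTop (nhds 0) := by
    have h1 : Tendsto (fun x : ℝ => x ^ (c + 1)) atTop (nhds 0) := by
      have := tendsto_rpow_neg_atTop (y := -(c + 1)) (by linarith)
      simpa only [neg_neg] using this
    have := (h1.neg.div_const (c + 1)).const_mul
      ((2 ^ (-c) * Real.exp b) * (2 * a) * 2 ^ (-c))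
    simpa using this
  obtain ⟨t, hDt, htX, ht1, hty⟩ := ((hbig.eventually (gt_mem_nhds (sub_pos.2 hq2'))).and
    ((eventually_ge_atTop X).and ((eventually_ge_atTop 1).and
      (eventually_ge_atTop (2 * y0))))).exists
  have ht0 : 0 < t := by linarith
  have hGt := GG_pos (b := b) (c := c) ht0
  obtain ⟨μ, hμ, hμI⟩ := exists_mu hb hc ht1
  refine ⟨1 / (a * GG b c t), μ, by positivity, hμ, ?_, ?_, ?_⟩
  · have h1 : μ (Set.Ioi (1 / 2)) = 1 := by
      rw [hμI, max_eq_left (by linarith), div_self hGt.ne']; simp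
    have h2 : μ (Set.Ioi (1 / 2))ᶜ = 0 := (prob_compl_eq_zero_iff measurableSet_Ioi).2 h1
    refine measure_mono_null (fun x hx => ?_) h2
    have : x < 0 := hx
    simp only [Set.mem_compl_iff, Set.mem_Ioi, not_lt]
    linarith
  · have h1 := hBtail.inv₀ one_ne_zero
    rw [inv_one] at h1
    refine h1.congr' ?_
    filter_upwards [eventually_ge_atTop t] with x hx
    rw [hμI, max_eq_right hx, ENNReal.toReal_ofReal
      (div_nonneg (GG_pos (by linarith)).le hGt.le), inv_div]
    by_cases hP : (ℙ {ω | B ω > x}).toReal = 0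
    · rw [hP]; simp
    · field_simp
  · intro x
    by_cases hxt : x < t
    · rw [hμI, max_eq_left hxt.le, div_self hGt.ne', ENNReal.ofReal_one]
      exact prob_le_one
    push Not at hxt
    have hx0 : 0 < x := by linarith
    have hGx := GG_pos (b := b) (c := c) hx0
    have hmeas : MeasurableSet {p : Ω × ℝ | A p.1 * p.2 + B p.1 > x} :=
      measurableSet_lt measurable_const (by fun_prop)
    rw [Measure.prod_apply hmeas, hμI, max_eq_right hxt]
    have hpt : ∀ᵐ ω ∂(ℙ : Measure Ω),
        μ (Prod.mk ω ⁻¹' {p : Ω × ℝ | A p.1 * p.2 + B p.1 > x}) ≤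
        ENNReal.ofReal (1 / GG b c t) * (ENNReal.ofReal (GG b c x) *
          Set.indicator {ω | B ω ≤ x / 2}
            (fun ω => ENNReal.ofReal (GG b c ((x - B ω) / A ω) / GG b c x)) ω +
          Set.indicator {ω | B ω > x / 2}
            (fun ω => ENNReal.ofReal (GG b c (max t (x - B ω)))) ω) := by
      filter_upwards [hA01'] with ω ⟨h0, h1⟩
      have hset : Prod.mk ω ⁻¹' {p : Ω × ℝ | A p.1 * p.2 + B p.1 > x} =
          Set.Ioi ((x - B ω) / A ω) := by
        ext z
        simp only [Set.mem_preimage, Set.mem_ofPred_eq, Set.mem_Ioi, gt_iff_lt]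
        rw [div_lt_iff₀ h0]
        constructor <;> intro h <;> linarith
      rw [hset, hμI, div_eq_inv_mul, ← one_div, ENNReal.ofReal_mul (by positivity)]
      gcongr
      by_cases hω : B ω ≤ x / 2
      · have hω' : ¬ (x / 2 < B ω) := not_lt.2 hω
        simp only [Set.indicator, Set.mem_ofPred_eq, hω, hω', if_true, gt_iff_lt, if_false, add_zero]
        rw [← ENNReal.ofReal_mul hGx.le, mul_div_cancel₀ _ hGx.ne']
        apply ENNReal.ofReal_le_ofReal
        exact GG_anti hb hc (div_pos (by linarith) h0) (le_max_right _ _)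
      · have hω' : x / 2 < B ω := not_le.1 hω
        simp only [Set.indicator, Set.mem_ofPred_eq, hω, hω', if_true, gt_iff_lt, if_false,
          mul_zero, zero_add]
        apply ENNReal.ofReal_le_ofReal
        apply GG_anti hb hc (by have := le_max_left t (x - B ω); linarith)
        apply max_le (le_max_left _ _)
        by_cases hn : 0 ≤ x - B ω
        · apply le_max_of_le_right
          rw [le_div_iff₀ h0]; nlinarith
        · apply le_max_of_le_left; linarith
    refine (lintegral_mono_ae hpt).trans ?_
    have m1 : Measurable (fun ω => Set.indicator {ω | B ω ≤ x / 2}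
            (fun ω => ENNReal.ofReal (GG b c ((x - B ω) / A ω) / GG b c x)) ω) := by
      apply Measurable.indicator _ (measurableSet_le hB measurable_const)
      exact (((GG_meas b c).comp ((measurable_const.sub hB).div hA)).div_const _).ennreal_ofReal
    rw [lintegral_const_mul' _ _ ENNReal.ofReal_ne_top,
      lintegral_add_left (m1.const_mul _), lintegral_const_mul' _ _ ENNReal.ofReal_ne_top]
    have i1 := (hX x (by linarith)).le
    have i2 := bigB ℙ B hB hb hc (by positivity) htail ht1 hx0 (by linarith)
    have i3 : ENNReal.ofReal (((2 ^ (-c) * Real.exp b) * (2 * a) * 2 ^ (-c) *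
        (-t ^ (c + 1) / (c + 1))) * GG b c x) ≤ ENNReal.ofReal ((1 - q) * GG b c x) := by
      apply ENNReal.ofReal_le_ofReal
      gcongr
    calc _ ≤ ENNReal.ofReal (1 / GG b c t) * (ENNReal.ofReal (GG b c x) * (q : ENNReal) +
          ENNReal.ofReal ((1 - q) * GG b c x)) := by
          gcongr
          exact i2.trans i3
      _ = _ := by
          rw [← ENNReal.ofReal_coe_nnreal, ← ENNReal.ofReal_mul hGx.le,
            ← ENNReal.ofReal_add (by positivity) (mul_nonneg (by linarith) hGx.le),
            ← ENNReal.ofReal_mul (by positivity)]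
          congr 1; field_simp; ring
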